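/- Let 2 ≤ n < p and set α := (p−n)/(p−1) ∈ (0,1). Let a_1,…,a_N > 0, let y_1,…,y_N ∈ ℝⁿ be distinct, let K : ℝⁿ → ℝ be a concave C² function, and define u(x) := −Σ_{j=1}^N a_j·|x − y_j|^α + K(x). Then u is continuous on ℝⁿ, its classical gradient ∇u (defined on ℝⁿ \ {y_1,…,y_N}, a set of full Lebesgue measure) satisfies ∫_Ω |∇u|^p dx < ∞ for every bounded open Ω ⊆ ℝⁿ, and for every nonnegative smooth compactly supported function φ : ℝⁿ → ℝ one has ∫_{ℝⁿ} |∇u(x)|^{p−2}·⟨∇u(x), ∇φ(x)⟩ dx ≥ 0. -/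

import Mathlib

open Filter Topology MeasureTheory RealInnerProductSpace
open scoped ENNReal


section aux
variable {n : ℕ}

lemma aux_ibp (b : OrthonormalBasis (Fin n) ℝ (EuclideanSpace ℝ (Fin n)))
    (G : EuclideanSpace ℝ (Fin n) → EuclideanSpace ℝ (Fin n)) (hG : ContDiff ℝ 1 G)
    (hdiv : ∀ x, ∑ i, ⟪b i, fderiv ℝ G x (b i)⟫ ≤ 0)
    (φ : EuclideanSpace ℝ (Fin n) → ℝ) (hφ : ContDiff ℝ 1 φ) (hc : HasCompactSupport φ)
    (h0 : ∀ x, 0 ≤ φ x) : 0 ≤ ∫ x, ⟪G x, gradient φ x⟫ := by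
  have hGc : Continuous (fderiv ℝ G) := hG.continuous_fderiv (by simp)
  have hφc : Continuous (fderiv ℝ φ) := hφ.continuous_fderiv (by simp)
  have hGd : Differentiable ℝ G := hG.differentiable (by simp)
  have hφd : Differentiable ℝ φ := hφ.differentiable (by simp)
  have hGcc := hG.continuous
  have hφcc := hφ.continuous
  have e1 : ∀ x, ⟪G x, gradient φ x⟫ = ∑ i, ⟪b i, G x⟫ * fderiv ℝ φ x (b i) := by
    intro x
    rw [real_inner_comm, inner_gradient_left]
    conv_lhs => rw [← b.sum_repr' (G x)]
    simp [map_sum]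
  have hfd : ∀ i x, fderiv ℝ (fun x => ⟪b i, G x⟫) x (b i) = ⟪b i, fderiv ℝ G x (b i)⟫ := by
    intro i x
    have := (innerSL ℝ (b i)).hasFDerivAt.comp x (hGd x).hasFDerivAt
    have h2 : fderiv ℝ (fun x => ⟪b i, G x⟫) x = _ := this.fderiv
    rw [h2]; simp
  have hc' : ∀ i, HasCompactSupport (fun x => fderiv ℝ φ x (b i)) := fun i =>
    (hc.fderiv (𝕜 := ℝ)).comp_left (g := fun L : EuclideanSpace ℝ (Fin n) →L[ℝ] ℝ => L (b i)) (by simp)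
  have i1 : ∀ i, Integrable (fun x => ⟪b i, G x⟫ * fderiv ℝ φ x (b i)) := fun i =>
    Continuous.integrable_of_hasCompactSupport (by fun_prop) (hc' i).mul_left
  have i2 : ∀ i, Integrable (fun x => ⟪b i, fderiv ℝ G x (b i)⟫ * φ x) := fun i =>
    Continuous.integrable_of_hasCompactSupport (by fun_prop) hc.mul_left
  have i3 : ∀ i, Integrable (fun x => ⟪b i, G x⟫ * φ x) := fun i =>
    Continuous.integrable_of_hasCompactSupport (by fun_prop) hc.mul_left
  simp_rw [e1]
  rw [integral_finsetSum _ (fun i _ => i1 i)]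
  have : ∀ i, ∫ x, ⟪b i, G x⟫ * fderiv ℝ φ x (b i) = - ∫ x, ⟪b i, fderiv ℝ G x (b i)⟫ * φ x := by
    intro i
    have := integral_mul_fderiv_eq_neg_fderiv_mul_of_integrable (μ := volume)
      (f := fun x => ⟪b i, G x⟫) (g := φ) (v := b i) (by simpa only [hfd] using i2 i) (i1 i) (i3 i)
      (fun x _ => (differentiableAt_const _).inner ℝ (hGd x)) (fun x _ => hφd x)
    simpa only [hfd] using this
  simp_rw [this]
  rw [Finset.sum_neg_distrib, ← integral_finsetSum _ (fun i _ => i2 i), ← integral_neg]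
  refine integral_nonneg fun x => ?_
  simp only [Pi.zero_apply]
  rw [← Finset.sum_mul]
  nlinarith [hdiv x, h0 x]

/-- derivative of the regularised power field -/
lemma aux_deriv {ε q : ℝ} (hε : 0 < ε)
    {V : EuclideanSpace ℝ (Fin n) → EuclideanSpace ℝ (Fin n)}
    {V' : EuclideanSpace ℝ (Fin n) →L[ℝ] EuclideanSpace ℝ (Fin n)}
    {x : EuclideanSpace ℝ (Fin n)} (hV : HasFDerivAt V V' x) :
    HasFDerivAt (fun x => (‖V x‖ ^ 2 + ε) ^ q • V x)
      ((‖V x‖ ^ 2 + ε) ^ q • V' + (((q * (‖V x‖ ^ 2 + ε) ^ (q - 1)) •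
        (2 • (innerSL ℝ (V x)) ∘SL V')) : EuclideanSpace ℝ (Fin n) →L[ℝ] ℝ).smulRight (V x)) x := by
  have h1 : HasFDerivAt (fun x => ‖V x‖ ^ 2 + ε) (2 • (innerSL ℝ (V x)) ∘SL V') x :=
    hV.norm_sq.add_const ε
  have h2 := h1.rpow_const (p := q) (Or.inl (by positivity))
  exact h2.smul hV

lemma aux_trace (b : OrthonormalBasis (Fin n) ℝ (EuclideanSpace ℝ (Fin n)))
    (A : EuclideanSpace ℝ (Fin n) →L[ℝ] EuclideanSpace ℝ (Fin n))
    (v : EuclideanSpace ℝ (Fin n)) (s t : ℝ) :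
    ∑ i, ⟪b i, (s • A + ((t • (2 • (innerSL ℝ v) ∘SL A)) :
      EuclideanSpace ℝ (Fin n) →L[ℝ] ℝ).smulRight v) (b i)⟫ =
    s * ∑ i, ⟪b i, A (b i)⟫ + 2 * t * ⟪v, A v⟫ := by
  have : A v = ∑ i, ⟪b i, v⟫ • A (b i) := by
    conv_lhs => rw [← b.sum_repr' v]
    simp
  rw [this, inner_sum, Finset.mul_sum, Finset.mul_sum, ← Finset.sum_add_distrib]
  refine Finset.sum_congr rfl fun i _ => ?_
  simp [inner_add_right, inner_smul_right]
  ring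

/-- sign condition -/
def AuxGood (b : OrthonormalBasis (Fin n) ℝ (EuclideanSpace ℝ (Fin n))) (p : ℝ)
    (A : EuclideanSpace ℝ (Fin n) →L[ℝ] EuclideanSpace ℝ (Fin n)) : Prop :=
  ∀ (S : ℝ) (v : EuclideanSpace ℝ (Fin n)), ‖v‖ ^ 2 ≤ S →
    S * ∑ i, ⟪b i, A (b i)⟫ + (p - 2) * ⟪v, A v⟫ ≤ 0

lemma AuxGood.add {b : OrthonormalBasis (Fin n) ℝ (EuclideanSpace ℝ (Fin n))} {p : ℝ}
    {A B : EuclideanSpace ℝ (Fin n) →L[ℝ] EuclideanSpace ℝ (Fin n)}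
    (hA : AuxGood b p A) (hB : AuxGood b p B) : AuxGood b p (A + B) := by
  intro S v h
  have h1 := hA S v h
  have h2 := hB S v h
  simp only [add_apply, inner_add_right, Finset.sum_add_distrib]
  linarith

lemma AuxGood.smul {b : OrthonormalBasis (Fin n) ℝ (EuclideanSpace ℝ (Fin n))} {p : ℝ}
    {A : EuclideanSpace ℝ (Fin n) →L[ℝ] EuclideanSpace ℝ (Fin n)} {c : ℝ} (hc : 0 ≤ c)
    (hA : AuxGood b p A) : AuxGood b p (c • A) := by
  intro S v h
  have h1 := hA S v h
  simp only [smul_apply, inner_smul_right, ← Finset.mul_sum]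
  nlinarith

lemma AuxGood.sum {ι : Type*} (s : Finset ι)
    {b : OrthonormalBasis (Fin n) ℝ (EuclideanSpace ℝ (Fin n))} {p : ℝ}
    {A : ι → EuclideanSpace ℝ (Fin n) →L[ℝ] EuclideanSpace ℝ (Fin n)}
    (hA : ∀ i, AuxGood b p (A i)) : AuxGood b p (∑ i ∈ s, A i) := by
  classical
  induction s using Finset.induction_on with
  | empty => intro S v h; simp
  | insert i s hi ih => rw [Finset.sum_insert hi]; exact (hA i).add ih

lemma aux_good_pow (b : OrthonormalBasis (Fin n) ℝ (EuclideanSpace ℝ (Fin n)))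
    (hn : 2 ≤ n) {p ε : ℝ} (hp : (n : ℝ) < p) (hε : 0 < ε) (z : EuclideanSpace ℝ (Fin n)) :
    AuxGood b p (-((‖z‖ ^ 2 + ε) ^ ((p - n) / (p - 1) / 2 - 1) •
      ContinuousLinearMap.id ℝ (EuclideanSpace ℝ (Fin n)) +
      (((((p - n) / (p - 1) / 2 - 1) * (‖z‖ ^ 2 + ε) ^ ((p - n) / (p - 1) / 2 - 1 - 1)) •
        (2 • (innerSL ℝ z) ∘SL ContinuousLinearMap.id ℝ (EuclideanSpace ℝ (Fin n)))) :
          EuclideanSpace ℝ (Fin n) →L[ℝ] ℝ).smulRight z)) := by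
  intro S v hv
  have hn' : (2 : ℝ) ≤ n := by exact_mod_cast hn
  obtain ⟨α, hα⟩ : ∃ α, α = (p - n) / (p - 1) := ⟨_, rfl⟩
  have hp1 : 0 < p - 1 := by linarith
  have hα' : α * (p - 1) = p - n := by rw [hα]; field_simp
  have hα1 : α ≤ 1 := by rw [hα, div_le_one hp1]; linarith
  have hα0 : 0 < α := by rw [hα]; apply div_pos <;> linarith
  rw [← hα]
  simp only [neg_apply, inner_neg_right, Finset.sum_neg_distrib]
  rw [aux_trace]
  have hs : 0 < ‖z‖ ^ 2 + ε := by positivity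
  have e : (‖z‖ ^ 2 + ε) ^ (α / 2 - 1) = (‖z‖ ^ 2 + ε) ^ (α / 2 - 1 - 1) * (‖z‖ ^ 2 + ε) := by
    rw [← Real.rpow_add_one hs.ne']; ring_nf
  rw [e]
  have hT : ∑ i, ⟪b i, (ContinuousLinearMap.id ℝ (EuclideanSpace ℝ (Fin n))) (b i)⟫ = (n : ℝ) := by
    simp
  rw [hT]
  have hC : ⟪z, v⟫ ^ 2 ≤ ‖z‖ ^ 2 * ‖v‖ ^ 2 := by
    have := abs_real_inner_le_norm z v
    rw [← mul_pow, ← sq_abs]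
    gcongr
  have hm : 0 < (‖z‖ ^ 2 + ε) ^ (α / 2 - 1 - 1) := by positivity
  obtain ⟨m, hm'⟩ : ∃ m, m = (‖z‖ ^ 2 + ε) ^ (α / 2 - 1 - 1) := ⟨_, rfl⟩
  rw [← hm'] at hm ⊢
  have hvv : ⟪v, v⟫ = ‖v‖ ^ 2 := real_inner_self_eq_norm_sq v
  have hzz : ⟪z, z⟫ = ‖z‖ ^ 2 := real_inner_self_eq_norm_sq z
  simp [inner_add_right, inner_smul_right]
  rw [real_inner_comm z v]
  obtain ⟨Z, hZ⟩ : ∃ Z, Z = ‖z‖ ^ 2 := ⟨_, rfl⟩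
  obtain ⟨Q, hQ⟩ : ∃ Q, Q = ‖v‖ ^ 2 := ⟨_, rfl⟩
  obtain ⟨I, hI⟩ : ∃ I, I = ⟪z, v⟫ := ⟨_, rfl⟩
  have hZ0 : 0 ≤ Z := by rw [hZ]; positivity
  have hQ0 : 0 ≤ Q := by rw [hQ]; positivity
  simp only [← hZ, ← hQ, ← hI] at *
  have key : 0 ≤ S * ((Z + ε) * n + (α - 2) * Z) + (p - 2) * ((Z + ε) * Q + (α - 2) * I ^ 2) := by
    have k1 : 0 ≤ (p - 2) * (2 - α) * (Z * Q - I ^ 2) := by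
      apply mul_nonneg (mul_nonneg _ _) <;> linarith
    have hS : 0 ≤ S := by linarith
    have k2 : 0 ≤ (2 - α) * ε * (S + (p - 2) * Q) := by
      apply mul_nonneg (mul_nonneg _ _) (add_nonneg hS (mul_nonneg _ _)) <;> linarith
    have k3 : 0 ≤ (p - 2) * (1 - α) * (Z + ε) * (S - Q) := by
      apply mul_nonneg (mul_nonneg (mul_nonneg _ _) _) <;> linarith
    have k4 : (n : ℝ) = p - α * (p - 1) := by linarith
    rw [k4]
    nlinarith
  have := mul_nonneg hm.le key
  nlinarith

lemma aux_good_concave (b : OrthonormalBasis (Fin n) ℝ (EuclideanSpace ℝ (Fin n))) {p : ℝ}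
    (hp : 2 ≤ p)
    (K : EuclideanSpace ℝ (Fin n) → ℝ) (hK : ConcaveOn ℝ Set.univ K) (hK2 : ContDiff ℝ 2 K)
    {A : EuclideanSpace ℝ (Fin n) →L[ℝ] EuclideanSpace ℝ (Fin n)} {x : EuclideanSpace ℝ (Fin n)}
    (hA : HasFDerivAt (gradient K) A x) : AuxGood b p A := by
  have hd : Differentiable ℝ K := hK2.differentiable (by simp)
  have key : ∀ h, ⟪h, A h⟫ ≤ 0 := by
    intro h
    have hline : ∀ t : ℝ, HasDerivAt (fun t : ℝ => x + t • h) h t := by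
      intro t
      simpa using ((hasDerivAt_id t).smul_const h).const_add x
    have hg : ∀ t : ℝ, HasDerivAt (fun t : ℝ => K (x + t • h)) ⟪h, gradient K (x + t • h)⟫ t := by
      intro t
      rw [real_inner_comm, inner_gradient_left]
      exact (hd _).hasFDerivAt.comp_hasDerivAt t (hline t)
    have hconc : ConcaveOn ℝ Set.univ (fun t : ℝ => K (x + t • h)) := by
      refine ⟨convex_univ, fun s _ t _ c d hc hd hcd => ?_⟩
      have := hK.2 (Set.mem_univ (x + s • h)) (Set.mem_univ (x + t • h)) hc hd hcd
      have e : x + (c • s + d • t) • h = c • (x + s • h) + d • (x + t • h) := by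
        obtain rfl : c = 1 - d := by linarith
        simp only [smul_eq_mul]
        module
      simpa only [e] using this
    have hanti := hconc.antitoneOn_deriv (fun t _ => (hg t).differentiableAt)
    have hder : deriv (fun t : ℝ => K (x + t • h)) = fun t => ⟪h, gradient K (x + t • h)⟫ :=
      funext fun t => (hg t).deriv
    rw [hder] at hanti
    have hA' : HasFDerivAt (gradient K) A (x + (0 : ℝ) • h) := by simpa using hA
    have h2 : HasDerivAt (fun t : ℝ => gradient K (x + t • h)) (A h) 0 :=
      HasFDerivAt.comp_hasDerivAt (l := gradient K) (f := fun t : ℝ => x + t • h) (0 : ℝ) hA' (hline 0)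
    have h3 : HasDerivAt (fun t : ℝ => ⟪h, gradient K (x + t • h)⟫) ⟪h, A h⟫ 0 :=
      (innerSL ℝ h).hasFDerivAt.comp_hasDerivAt (0 : ℝ) h2
    have := hanti.derivWithin_nonpos (x := 0)
    rw [derivWithin_univ, h3.deriv] at this
    exact this
  intro S v hv
  have h1 : ∑ i, ⟪b i, A (b i)⟫ ≤ 0 := Finset.sum_nonpos fun i _ => key _
  have h2 := key v
  have hS : 0 ≤ S := le_trans (by positivity) hv
  nlinarith


/-- regularised gradient field -/
noncomputable def auxV (p : ℝ) {N : ℕ} (a : Fin N → ℝ) (y : Fin N → EuclideanSpace ℝ (Fin n))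
    (K : EuclideanSpace ℝ (Fin n) → ℝ) (ε : ℝ) (x : EuclideanSpace ℝ (Fin n)) :
    EuclideanSpace ℝ (Fin n) :=
  ∑ j, (a j * ((p - n) / (p - 1))) •
    (-((‖x - y j‖ ^ 2 + ε) ^ ((p - n) / (p - 1) / 2 - 1) • (x - y j))) + gradient K x

/-- dominating function -/
noncomputable def auxM (p : ℝ) {N : ℕ} (a : Fin N → ℝ) (y : Fin N → EuclideanSpace ℝ (Fin n))
    (K : EuclideanSpace ℝ (Fin n) → ℝ) (x : EuclideanSpace ℝ (Fin n)) : ℝ :=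
  ∑ j, (a j * ((p - n) / (p - 1))) * ‖x - y j‖ ^ ((p - n) / (p - 1) - 1) + ‖gradient K x‖

lemma aux_gradK {K : EuclideanSpace ℝ (Fin n) → ℝ} (hK2 : ContDiff ℝ 2 K) :
    ContDiff ℝ 1 (gradient K) := by
  have h : ContDiff ℝ 1 (fderiv ℝ K) := hK2.fderiv_right (by norm_num)
  exact (InnerProductSpace.toDual ℝ (EuclideanSpace ℝ (Fin n))).symm.contDiff.comp h

lemma auxV_contDiff (p : ℝ) {N : ℕ} (a : Fin N → ℝ) (y : Fin N → EuclideanSpace ℝ (Fin n))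
    {K : EuclideanSpace ℝ (Fin n) → ℝ} (hK2 : ContDiff ℝ 2 K) {ε : ℝ} (hε : 0 < ε) :
    ContDiff ℝ 1 (auxV p a y K ε) := by
  unfold auxV
  refine ContDiff.add (ContDiff.sum fun j _ => ?_) (aux_gradK hK2)
  have h : ContDiff ℝ 1 (fun x : EuclideanSpace ℝ (Fin n) => x - y j) :=
    contDiff_id.sub contDiff_const
  have h2 : ContDiff ℝ 1 (fun x : EuclideanSpace ℝ (Fin n) => ‖x - y j‖ ^ 2 + ε) :=
    (h.norm_sq ℝ).add contDiff_const
  have h3 : ContDiff ℝ 1 (fun x : EuclideanSpace ℝ (Fin n) =>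
      (‖x - y j‖ ^ 2 + ε) ^ ((p - n) / (p - 1) / 2 - 1)) :=
    h2.rpow_const_of_ne fun x => by positivity
  exact ((h3.smul h).neg).const_smul _

lemma auxV_good (b : OrthonormalBasis (Fin n) ℝ (EuclideanSpace ℝ (Fin n)))
    (hn : 2 ≤ n) {p : ℝ} (hp : (n : ℝ) < p)
    {N : ℕ} {a : Fin N → ℝ} (ha : ∀ j, 0 < a j) (y : Fin N → EuclideanSpace ℝ (Fin n))
    {K : EuclideanSpace ℝ (Fin n) → ℝ} (hK : ConcaveOn ℝ Set.univ K) (hK2 : ContDiff ℝ 2 K)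
    {ε : ℝ} (hε : 0 < ε) (x : EuclideanSpace ℝ (Fin n)) :
    AuxGood b p (fderiv ℝ (auxV p a y K ε) x) := by
  have hn' : (2 : ℝ) ≤ n := by exact_mod_cast hn
  have hKd : HasFDerivAt (gradient K) (fderiv ℝ (gradient K) x) x :=
    ((aux_gradK hK2).differentiable (by simp) x).hasFDerivAt
  have h1 : ∀ j, HasFDerivAt (fun x => x - y j)
      (ContinuousLinearMap.id ℝ (EuclideanSpace ℝ (Fin n))) x :=
    fun j => (hasFDerivAt_id x).sub_const (y j)
  have h2 := fun j => ((aux_deriv (q := (p - n) / (p - 1) / 2 - 1) hε (h1 j)).fun_neg).fun_const_smul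
    (a j * ((p - n) / (p - 1)))
  have h3 := (HasFDerivAt.fun_sum (u := Finset.univ) fun j _ => h2 j).fun_add hKd
  have h4 : HasFDerivAt (auxV p a y K ε) _ x := h3
  rw [h4.fderiv]
  refine AuxGood.add (AuxGood.sum _ fun j => AuxGood.smul ?_ ?_)
    (aux_good_concave b (by linarith) K hK hK2 hKd)
  · exact mul_nonneg (ha j).le (div_nonneg (by linarith) (by linarith))
  · exact aux_good_pow b hn hp hε _

lemma auxV_main (hn : 2 ≤ n) {p : ℝ} (hp : (n : ℝ) < p)
    {N : ℕ} {a : Fin N → ℝ} (ha : ∀ j, 0 < a j) (y : Fin N → EuclideanSpace ℝ (Fin n))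
    {K : EuclideanSpace ℝ (Fin n) → ℝ} (hK : ConcaveOn ℝ Set.univ K) (hK2 : ContDiff ℝ 2 K)
    {ε : ℝ} (hε : 0 < ε) (φ : EuclideanSpace ℝ (Fin n) → ℝ) (hφ : ContDiff ℝ 1 φ)
    (hc : HasCompactSupport φ) (h0 : ∀ x, 0 ≤ φ x) :
    0 ≤ ∫ x, ⟪(‖auxV p a y K ε x‖ ^ 2 + ε) ^ ((p - 2) / 2) • auxV p a y K ε x, gradient φ x⟫ := by
  have hV := auxV_contDiff p a y hK2 hε
  refine aux_ibp (EuclideanSpace.basisFun (Fin n) ℝ) (fun x => (‖auxV p a y K ε x‖ ^ 2 + ε) ^ ((p - 2) / 2) • auxV p a y K ε x) ?_ ?_ φ hφ hc h0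
  · refine ContDiff.smul (ContDiff.rpow_const_of_ne ?_ fun x => by positivity) hV
    exact (hV.norm_sq ℝ).add contDiff_const
  · intro x
    rw [(aux_deriv hε (hV.differentiable (by simp) x).hasFDerivAt).fderiv, aux_trace]
    have hg := auxV_good (EuclideanSpace.basisFun (Fin n) ℝ) hn hp ha y hK hK2 hε x
      (‖auxV p a y K ε x‖ ^ 2 + ε) (auxV p a y K ε x) (by linarith)
    have hs : 0 < ‖auxV p a y K ε x‖ ^ 2 + ε := by positivity
    have e : (‖auxV p a y K ε x‖ ^ 2 + ε) ^ ((p - 2) / 2) =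
        (‖auxV p a y K ε x‖ ^ 2 + ε) ^ ((p - 2) / 2 - 1) * (‖auxV p a y K ε x‖ ^ 2 + ε) := by
      rw [← Real.rpow_add_one hs.ne']; ring_nf
    rw [e]
    have := mul_nonpos_of_nonneg_of_nonpos (Real.rpow_nonneg hs.le ((p - 2) / 2 - 1)) hg
    refine le_of_eq_of_le ?_ this
    ring

lemma auxM_nonneg (hn : 2 ≤ n) {p : ℝ} (hp : (n : ℝ) < p)
    {N : ℕ} {a : Fin N → ℝ} (ha : ∀ j, 0 < a j) (y : Fin N → EuclideanSpace ℝ (Fin n))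
    (K : EuclideanSpace ℝ (Fin n) → ℝ) (x : EuclideanSpace ℝ (Fin n)) : 0 ≤ auxM p a y K x := by
  have hn' : (2 : ℝ) ≤ n := by exact_mod_cast hn
  have : 0 ≤ (p - n) / (p - 1) := div_nonneg (by linarith) (by linarith)
  exact add_nonneg (Finset.sum_nonneg fun j _ => mul_nonneg (mul_nonneg (ha j).le this)
    (by positivity)) (norm_nonneg _)

lemma auxV_le (hn : 2 ≤ n) {p : ℝ} (hp : (n : ℝ) < p)
    {N : ℕ} {a : Fin N → ℝ} (ha : ∀ j, 0 < a j) (y : Fin N → EuclideanSpace ℝ (Fin n))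
    (K : EuclideanSpace ℝ (Fin n) → ℝ)
    {ε : ℝ} (hε : 0 ≤ ε) (x : EuclideanSpace ℝ (Fin n)) (hx : ∀ j, x ≠ y j) :
    ‖auxV p a y K ε x‖ ≤ auxM p a y K x := by
  have hn' : (2 : ℝ) ≤ n := by exact_mod_cast hn
  have hα0 : 0 ≤ (p - n) / (p - 1) := div_nonneg (by linarith) (by linarith)
  have hα1 : (p - n) / (p - 1) ≤ 1 := (div_le_one (by linarith)).2 (by linarith)
  unfold auxV auxM
  refine (norm_add_le _ _).trans (add_le_add_left ((norm_sum_le _ _).trans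
    (Finset.sum_le_sum fun j _ => ?_)) _)
  have hc : 0 ≤ a j * ((p - n) / (p - 1)) := mul_nonneg (ha j).le hα0
  rw [norm_smul, Real.norm_of_nonneg hc, norm_neg, norm_smul,
    Real.norm_of_nonneg (by positivity)]
  refine mul_le_mul_of_nonneg_left ?_ hc
  have hr : 0 < ‖x - y j‖ := norm_pos_iff.2 (sub_ne_zero.2 (hx j))
  obtain ⟨α, hα⟩ : ∃ α, α = (p - n) / (p - 1) := ⟨_, rfl⟩
  rw [← hα] at hα0 hα1 ⊢
  calc (‖x - y j‖ ^ 2 + ε) ^ (α / 2 - 1) * ‖x - y j‖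
      ≤ (‖x - y j‖ ^ 2) ^ (α / 2 - 1) * ‖x - y j‖ := by
        refine mul_le_mul_of_nonneg_right ?_ hr.le
        exact Real.rpow_le_rpow_of_nonpos (by positivity) (by linarith) (by linarith)
    _ = ‖x - y j‖ ^ (α - 1) := by
        rw [← Real.rpow_natCast, ← Real.rpow_mul hr.le, ← Real.rpow_add_one hr.ne']
        congr 1; push_cast; ring

lemma aux_hasGradient (p : ℝ) {N : ℕ} (a : Fin N → ℝ) (y : Fin N → EuclideanSpace ℝ (Fin n))
    {K : EuclideanSpace ℝ (Fin n) → ℝ} (hK2 : ContDiff ℝ 2 K)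
    (x : EuclideanSpace ℝ (Fin n)) (hx : ∀ j, x ≠ y j) :
    gradient (fun x => -∑ j, a j * ‖x - y j‖ ^ ((p - n) / (p - 1)) + K x) x = auxV p a y K 0 x := by
  obtain ⟨α, hα⟩ : ∃ α, α = (p - n) / (p - 1) := ⟨_, rfl⟩
  have hrw : (fun x => -∑ j, a j * ‖x - y j‖ ^ ((p - n) / (p - 1)) + K x) =
      (fun x => -∑ j, a j * (‖x - y j‖ ^ 2) ^ (α / 2) + K x) := by
    funext x
    congr 2
    refine Finset.sum_congr rfl fun j _ => ?_
    rw [← Real.rpow_natCast, ← Real.rpow_mul (norm_nonneg _), hα]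
    congr 2; push_cast; ring
  rw [hrw]
  apply HasGradientAt.gradient
  rw [hasGradientAt_iff_hasFDerivAt]
  have h1 : ∀ j, HasFDerivAt (fun x => x - y j)
      (ContinuousLinearMap.id ℝ (EuclideanSpace ℝ (Fin n))) x :=
    fun j => (hasFDerivAt_id x).sub_const (y j)
  have h2 := fun j => ((h1 j).norm_sq.rpow_const (p := α / 2) (Or.inl
    (pow_ne_zero 2 (norm_ne_zero_iff.2 (sub_ne_zero.2 (hx j)))))).const_mul (a j)
  have hKd : HasFDerivAt K (fderiv ℝ K x) x := (hK2.differentiable (by simp) x).hasFDerivAt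
  have h3 := ((HasFDerivAt.fun_sum (u := Finset.univ) fun j _ => h2 j).fun_neg).fun_add hKd
  refine h3.congr_fderiv ?_
  ext v
  simp only [auxV, ← hα, map_add, map_sum, toDual_gradient, add_apply, neg_apply]
  congr 1
  simp [← Finset.sum_neg_distrib]
  refine Finset.sum_congr rfl fun j _ => ?_
  ring

lemma auxM_integrable (hn : 2 ≤ n) {p : ℝ} (hp : (n : ℝ) < p)
    {N : ℕ} {a : Fin N → ℝ} (ha : ∀ j, 0 < a j) (y : Fin N → EuclideanSpace ℝ (Fin n))
    {K : EuclideanSpace ℝ (Fin n) → ℝ} (hK2 : ContDiff ℝ 2 K)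
    (s : Set (EuclideanSpace ℝ (Fin n))) (hs : IsCompact s) :
    IntegrableOn (fun x => (auxM p a y K x + 1) ^ p) s := by
  have hn' : (2 : ℝ) ≤ n := by exact_mod_cast hn
  have hp0 : 0 < p := by linarith
  have hfin : IsFiniteMeasure (volume.restrict s) := ⟨by simpa using hs.measure_lt_top⟩
  have hgK := (aux_gradK hK2).continuous
  have key : ∀ z : EuclideanSpace ℝ (Fin n),
      MemLp (fun x => ‖x - z‖ ^ ((p - n) / (p - 1) - 1)) (ENNReal.ofReal p) (volume.restrict s) := by
    intro z
    rw [← integrable_norm_rpow_iff (by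
      refine Measurable.aestronglyMeasurable ?_
      fun_prop) (by simpa using hp0) (by simp)]
    rw [ENNReal.toReal_ofReal hp0.le]
    have hloc : LocallyIntegrable (fun x : EuclideanSpace ℝ (Fin n) =>
        (‖x‖ ^ ((p - n) / (p - 1) - 1)) ^ p) := by
      refine locallyIntegrable_of_norm_le_rpow (C := 1) (α := -(((p - n) / (p - 1) - 1) * p))
        ?_ ?_ ?_ ?_
      · simp; omega
      · simp only [finrank_euclideanSpace, Fintype.card_fin]
        have : -(((p - n) / (p - 1) - 1) * p) = (n - 1) * p / (p - 1) := by
          have : p - 1 ≠ 0 := by linarith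
          field_simp; ring
        rw [this, div_lt_iff₀ (by linarith)]
        nlinarith
      · refine Eventually.of_forall fun x => ?_
        rw [Real.norm_of_nonneg (by positivity), ← Real.rpow_mul (norm_nonneg _)]
        simp
      · refine Measurable.aestronglyMeasurable ?_
        fun_prop
    have h1 := hloc.integrableOn_isCompact (hs.image (f := fun x => x - z) (by fun_prop))
    have h2 := ((measurePreserving_sub_right volume z).integrableOn_image
      (Homeomorph.subRight z).measurableEmbedding).1 h1
    refine (integrableOn_congr_fun_ae (Eventually.of_forall fun x => ?_)).1 h2
    simp only [Function.comp]
    rw [Real.norm_of_nonneg (by positivity)]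
  have hK' : MemLp (fun x => ‖gradient K x‖) (ENNReal.ofReal p) (volume.restrict s) := by
    obtain ⟨C, hC⟩ := hs.exists_bound_of_continuousOn (hgK.norm.continuousOn (s := s))
    refine MemLp.of_bound (hgK.norm.aestronglyMeasurable) C ?_
    exact (ae_restrict_iff' hs.measurableSet).2 (Eventually.of_forall hC)
  have hM : MemLp (fun x => auxM p a y K x + 1) (ENNReal.ofReal p) (volume.restrict s) := by
    unfold auxM
    exact ((memLp_finsetSum _ fun j _ => (key (y j)).const_mul _).add hK').add (memLp_const 1)
  have := hM.integrable_norm_rpow (by simpa using hp0) (by simp)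
  rw [ENNReal.toReal_ofReal hp0.le] at this
  refine this.congr (Eventually.of_forall fun x => ?_)
  have := auxM_nonneg hn hp ha y K x
  simp only []
  rw [Real.norm_of_nonneg (by linarith)]

lemma aux_ae {N : ℕ} (hn : 2 ≤ n) (y : Fin N → EuclideanSpace ℝ (Fin n)) :
    ∀ᵐ x : EuclideanSpace ℝ (Fin n), ∀ j, x ≠ y j := by
  have : Nonempty (Fin n) := ⟨⟨0, by omega⟩⟩
  rw [ae_all_iff]
  intro j
  exact Measure.ae_ne volume (y j)

end aux

/-- for `2 ≤ n < p`, `α = (p−n)/(p−1)`, weights `aⱼ > 0`, distinct poles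
`yⱼ` and a concave `C²` function `K`, the function `u(x) = −Σⱼ aⱼ|x − yⱼ|^α + K(x)`
is continuous, `|∇u|^p` is integrable on every bounded open set, and
`∫ |∇u|^{p−2}⟨∇u, ∇φ⟩ dx ≥ 0` for every nonnegative `φ ∈ C_c^∞(ℝⁿ)`,
i.e. `u` is a weak supersolution of the p-Laplace equation. -/
theorem stmt16 {n : ℕ} (hn : 2 ≤ n) (p : ℝ) (hp : (n : ℝ) < p)
    (N : ℕ) (a : Fin N → ℝ) (ha : ∀ j, 0 < a j)
    (y : Fin N → EuclideanSpace ℝ (Fin n)) (hy : Function.Injective y)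
    (K : EuclideanSpace ℝ (Fin n) → ℝ)
    (hK : ConcaveOn ℝ Set.univ K) (hK2 : ContDiff ℝ 2 K)
    (u : EuclideanSpace ℝ (Fin n) → ℝ)
    (hu : u = fun x => -∑ j, a j * ‖x - y j‖ ^ ((p - n) / (p - 1)) + K x) :
    Continuous u ∧
    (∀ Ω : Set (EuclideanSpace ℝ (Fin n)), IsOpen Ω → Bornology.IsBounded Ω →
      ∫⁻ x in Ω, ENNReal.ofReal (‖gradient u x‖ ^ p) < ⊤) ∧
    (∀ φ : EuclideanSpace ℝ (Fin n) → ℝ,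
      ContDiff ℝ (⊤ : ℕ∞) φ → HasCompactSupport φ → (∀ x, 0 ≤ φ x) →
      0 ≤ ∫ x, ‖gradient u x‖ ^ (p - 2) * ⟪gradient u x, gradient φ x⟫) := by
  have hn' : (2 : ℝ) ≤ n := by exact_mod_cast hn
  have hp0 : 0 < p := by linarith
  have hα0 : 0 ≤ (p - n) / (p - 1) := div_nonneg (by linarith) (by linarith)
  have hgrad : ∀ x, (∀ j, x ≠ y j) → gradient u x = auxV p a y K 0 x := by
    intro x hx
    rw [hu]
    exact aux_hasGradient p a y hK2 x hx
  have hM0 := auxM_nonneg hn hp ha y K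
  refine ⟨?_, ?_, ?_⟩
  · rw [hu]
    refine Continuous.add (Continuous.neg (continuous_finsetSum _ fun j _ => ?_)) hK2.continuous
    exact continuous_const.mul
      ((continuous_id.sub continuous_const).norm.rpow_const fun x => Or.inr hα0)
  · intro Ω _ hΩ
    have hint := auxM_integrable hn hp ha y hK2 (closure Ω) hΩ.isCompact_closure
    have hint' := hint.mono_set subset_closure
    refine lt_of_le_of_lt (lintegral_mono_ae ?_) hint'.lintegral_lt_top
    filter_upwards [ae_restrict_of_ae (aux_ae hn y)] with x hx
    refine ENNReal.ofReal_le_ofReal (Real.rpow_le_rpow (norm_nonneg _) ?_ hp0.le)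
    rw [hgrad x hx]
    linarith [auxV_le hn hp ha y K le_rfl x hx]
  · intro φ hφ hc h0
    have hφ1 : ContDiff ℝ 1 φ := hφ.of_le (by exact_mod_cast le_top)
    have hgφ : Continuous (gradient φ) :=
      (InnerProductSpace.toDual ℝ (EuclideanSpace ℝ (Fin n))).symm.continuous.comp
        (hφ1.continuous_fderiv (by simp))
    have hgs : HasCompactSupport (gradient φ) :=
      (hc.fderiv (𝕜 := ℝ)).comp_left (g := (InnerProductSpace.toDual ℝ
        (EuclideanSpace ℝ (Fin n))).symm) (by simp)
    have hlim : Tendsto (fun ε : ℝ => ∫ x, ⟪(‖auxV p a y K ε x‖ ^ 2 + ε) ^ ((p - 2) / 2) •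
        auxV p a y K ε x, gradient φ x⟫) (𝓝[>] 0)
        (𝓝 (∫ x, ‖gradient u x‖ ^ (p - 2) * ⟪gradient u x, gradient φ x⟫)) := by
      have hev : ∀ᶠ ε : ℝ in 𝓝[>] 0, ε ∈ Set.Ioo (0 : ℝ) 1 := Ioo_mem_nhdsGT one_pos
      refine tendsto_integral_filter_of_dominated_convergence
        (fun x => (auxM p a y K x + 1) ^ p * ‖gradient φ x‖) ?_ ?_ ?_ ?_
      · filter_upwards [hev] with ε hε
        have hV := (auxV_contDiff p a y hK2 hε.1).continuous
        have hε1 := hε.1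
        refine Continuous.aestronglyMeasurable (Continuous.inner (Continuous.fun_smul ?_ hV) hgφ)
        have hS : Continuous (fun x => ‖auxV p a y K ε x‖ ^ 2 + ε) :=
          (hV.norm.pow 2).add continuous_const
        exact hS.rpow_const fun x => Or.inl (by positivity)
      · filter_upwards [hev] with ε hε
        filter_upwards [aux_ae hn y] with x hx
        have hle := auxV_le hn hp ha y K hε.1.le x hx
        have hε1 := hε.1
        refine (norm_inner_le_norm _ _).trans (mul_le_mul_of_nonneg_right ?_ (norm_nonneg _))
        rw [norm_smul, Real.norm_of_nonneg (by positivity)]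
        have hm := hM0 x
        calc (‖auxV p a y K ε x‖ ^ 2 + ε) ^ ((p - 2) / 2) * ‖auxV p a y K ε x‖
            ≤ ((auxM p a y K x + 1) ^ 2) ^ ((p - 2) / 2) * (auxM p a y K x + 1) := by
              refine mul_le_mul (Real.rpow_le_rpow (by positivity) ?_ (by linarith)) (by linarith)
                (norm_nonneg _) (by positivity)
              nlinarith [hε.2, norm_nonneg (auxV p a y K ε x)]
          _ = (auxM p a y K x + 1) ^ (p - 1) := by
              rw [← Real.rpow_natCast, ← Real.rpow_mul (by linarith),
                ← Real.rpow_add_one (by linarith)]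
              congr 1; push_cast; ring
          _ ≤ (auxM p a y K x + 1) ^ p :=
              Real.rpow_le_rpow_of_exponent_le (by linarith) (by linarith)
      · have hint := auxM_integrable hn hp ha y hK2 (tsupport (gradient φ)) hgs
        have := hint.mul_continuousOn hgφ.norm.continuousOn hgs
        refine (integrableOn_iff_integrable_of_support_subset ?_).1 this
        intro x hx
        refine subset_tsupport _ ?_
        rw [Function.mem_support] at hx ⊢
        intro h
        exact hx (by simp [h])
      · filter_upwards [aux_ae hn y] with x hx
        have hVt : Tendsto (fun ε : ℝ => auxV p a y K ε x) (𝓝[>] 0) (𝓝 (auxV p a y K 0 x)) := by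
          refine Tendsto.mono_left ?_ nhdsWithin_le_nhds
          unfold auxV
          refine Tendsto.add (tendsto_finsetSum _ fun j _ => ?_) tendsto_const_nhds
          refine (Tendsto.neg (Tendsto.smul_const ?_ _)).const_smul _
          refine Tendsto.rpow_const (tendsto_const_nhds.add tendsto_id) (Or.inl ?_)
          simpa using sub_ne_zero.2 (hx j)
        have h1 : Tendsto (fun ε : ℝ => (‖auxV p a y K ε x‖ ^ 2 + ε) ^ ((p - 2) / 2)) (𝓝[>] 0)
            (𝓝 ((‖auxV p a y K 0 x‖ ^ 2 + 0) ^ ((p - 2) / 2))) :=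
          ((hVt.norm.pow 2).add (tendsto_id.mono_left nhdsWithin_le_nhds)).rpow_const
            (Or.inr (by linarith))
        have h2 := (h1.smul hVt).inner (tendsto_const_nhds (x := gradient φ x)) (𝕜 := ℝ)
        convert h2 using 2
        rw [hgrad x hx, real_inner_smul_left, add_zero, ← Real.rpow_natCast,
          ← Real.rpow_mul (norm_nonneg _)]
        congr 2; push_cast; ring
    refine ge_of_tendsto hlim ?_
    filter_upwards [self_mem_nhdsWithin] with ε hε
    exact auxV_main hn hp ha y hK hK2 hε φ hφ1 hc h0
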